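/- arXiv:2103.10627 — 2 statements merged into one kernel-verified Lean document; each statement's English description precedes it below -/
import Mathlib

section
/- Let d ≥ 2 and let F be a smooth function on the standard unit sphere 𝕊^{d−1} ⊂ ℝ^d with ∫_{𝕊^{d−1}} F = 0. Then 0 ≤ ‖ΔF + (d−1)F‖² − (d+1)⟨F, −ΔF − (d−1)F⟩, where Δ is the spherical Laplacian, ⟨·,·⟩ is the L² inner product on 𝕊^{d−1} and ‖·‖ the associated L² norm. -/
open MeasureTheory Real
open scoped RealInnerProductSpace Pointwise

noncomputable section

/-- The surface (area) measure on the unit sphere `𝕊^{d-1} ⊂ ℝ^d`. -/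
def sphMeasure (d : ℕ) : Measure (Metric.sphere (0 : EuclideanSpace ℝ (Fin d)) 1) :=
  (volume : Measure (EuclideanSpace ℝ (Fin d))).toSphere

/-- The degree-zero homogeneous extension of a function on the unit sphere to `ℝ^d`
(extended by `0` at the origin). -/
def ext0 {d : ℕ} (F : Metric.sphere (0 : EuclideanSpace ℝ (Fin d)) 1 → ℝ)
    (x : EuclideanSpace ℝ (Fin d)) : ℝ :=
  letI := Classical.dec (x = 0)
  if hx : x = 0 then 0
  else F ⟨‖x‖⁻¹ • x, by
    simp [mem_sphere_zero_iff_norm, norm_smul, abs_of_nonneg, inv_mul_cancel₀,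
      norm_ne_zero_iff.mpr hx]⟩

/-- The Euclidean Laplacian of `f : ℝ^d → ℝ`. -/
def eucLap {d : ℕ} (f : EuclideanSpace ℝ (Fin d) → ℝ) (x : EuclideanSpace ℝ (Fin d)) : ℝ :=
  ∑ i, fderiv ℝ (fun y => fderiv ℝ f y (EuclideanSpace.single i 1)) x (EuclideanSpace.single i 1)

/-- The Laplace–Beltrami operator (spherical Laplacian) on the unit sphere `𝕊^{d-1}`:
for `F : 𝕊^{d-1} → ℝ`, `sphLap F` is the restriction to the sphere of the Euclidean
Laplacian of the degree-zero homogeneous extension of `F`.  (This is the standard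
characterization of the spherical Laplacian.) -/
def sphLap {d : ℕ} (F : Metric.sphere (0 : EuclideanSpace ℝ (Fin d)) 1 → ℝ) :
    Metric.sphere (0 : EuclideanSpace ℝ (Fin d)) 1 → ℝ :=
  fun θ => eucLap (ext0 F) θ.val

/-- A function on the unit sphere is smooth iff its degree-zero homogeneous extension is
smooth away from the origin. -/
def SphSmooth {d : ℕ} (F : Metric.sphere (0 : EuclideanSpace ℝ (Fin d)) 1 → ℝ) : Prop :=
  ContDiffOn ℝ (⊤ : ℕ∞) (ext0 F) {(0 : EuclideanSpace ℝ (Fin d))}ᶜ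

theorem abstract_gap {H : Type*} [NormedAddCommGroup H] [InnerProductSpace ℝ H]
    (R : H → H → Prop)
    (hR : ∀ u u' v v', R u u' → R v v' → ⟪u', v⟫ = ⟪u, v'⟫)
    (V : ℕ → Submodule ℝ H) [∀ N, (V N).HasOrthogonalProjection] (hmono : Monotone V)
    (hdense : ⊤ ≤ (⨆ N, V N).topologicalClosure) (lam : ℕ → ℝ) (a b : ℝ)
    (hlam : ∀ N, 0 ≤ (lam (N+1) - a) * (lam (N+1) - b))
    (hV0 : ∀ v ∈ V 0, R v 0)
    (hV : ∀ N, ∀ v ∈ V (N+1), ∃ v', R v v' ∧ v' + lam (N+1) • v ∈ V N)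
    (f f' : H) (hf : R f f') (hf0 : ∀ v ∈ V 0, ⟪f, v⟫ = 0) :
    0 ≤ ⟪f' + a • f, f' + b • f⟫ := by
  have hVp : ∀ N, ∀ v ∈ V N, ∃ v', R v v' ∧ v' ∈ V N := by
    intro N
    cases N with
    | zero => exact fun v hv => ⟨0, hV0 v hv, zero_mem _⟩
    | succ N =>
      intro v hv
      obtain ⟨v', h1, h2⟩ := hV N v hv
      refine ⟨v', h1, ?_⟩
      have h3 := (V (N+1)).sub_mem (hmono (Nat.le_succ N) h2) ((V (N+1)).smul_mem (lam (N+1)) hv)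
      simpa using h3
  -- key: on the increments the operator acts as a scalar
  have key : ∀ N, (V (N+1)).starProjection f' - (V N).starProjection f'
      = - lam (N+1) • ((V (N+1)).starProjection f - (V N).starProjection f) := by
    intro N
    set w := (V (N+1)).starProjection f - (V N).starProjection f with hw
    set w' := (V (N+1)).starProjection f' - (V N).starProjection f' with hw'
    set z := w' + lam (N+1) • w with hz
    have horth : ∀ g : H, ∀ q ∈ V N,
        ⟪(V (N+1)).starProjection g - (V N).starProjection g, q⟫ = 0 := by
      intro g q hq
      have e1 := (V (N+1)).starProjection_inner_eq_zero g q (hmono (Nat.le_succ N) hq)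
      have e2 := (V N).starProjection_inner_eq_zero g q hq
      rw [inner_sub_left] at *
      linarith
    have hin : ∀ g : H, (V (N+1)).starProjection g - (V N).starProjection g ∈ V (N+1) := fun g =>
      (V (N+1)).sub_mem (Submodule.starProjection_apply_mem _ _)
        (hmono (Nat.le_succ N) (Submodule.starProjection_apply_mem _ _))
    have hzin : z ∈ V (N+1) := (V (N+1)).add_mem (hin f') ((V (N+1)).smul_mem _ (hin f))
    have hzq : ∀ q ∈ V N, ⟪z, q⟫ = 0 := by
      intro q hq
      rw [hz, inner_add_left, inner_smul_left, horth f' q hq, horth f q hq]; simp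
    obtain ⟨z', hzz', hz'⟩ := hV N z hzin
    have hy : z' + lam (N+1) • z = 0 := by
      rw [← inner_self_eq_zero (𝕜 := ℝ)]
      obtain ⟨q', h1, h2⟩ := hVp N _ hz'
      have := hR _ _ _ _ hzz' h1
      rw [inner_add_left, this, hzq _ h2, inner_smul_left, hzq _ hz']
      simp
    have hproj : ∀ g : H, ⟪(V (N+1)).starProjection g - (V N).starProjection g, z⟫ = ⟪g, z⟫ := by
      intro g
      have e1 := (V (N+1)).starProjection_inner_eq_zero g z hzin
      have e2 := hzq _ (Submodule.starProjection_apply_mem (V N) g)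
      rw [real_inner_comm] at e2
      rw [inner_sub_left] at *
      linarith
    have hz0 : z = 0 := by
      rw [← inner_self_eq_zero (𝕜 := ℝ)]
      calc ⟪z, z⟫ = ⟪w', z⟫ + lam (N+1) * ⟪w, z⟫ := by
            conv_lhs => rw [hz, ← hz, inner_add_left, inner_smul_left]
            simp
        _ = ⟪f', z⟫ + lam (N+1) * ⟪f, z⟫ := by rw [hproj, hproj]
        _ = ⟪f, z'⟫ + lam (N+1) * ⟪f, z⟫ := by rw [hR _ _ _ _ hf hzz']
        _ = ⟪f, z' + lam (N+1) • z⟫ := by rw [inner_add_right f z', inner_smul_right f z]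
        _ = 0 := by rw [hy, inner_zero_right]
    have : w' = z - lam (N+1) • w := by rw [hz]; abel
    rw [this, hz0]; simp
  have hQ : ∀ N, 0 ≤ ⟪(V N).starProjection f' + a • (V N).starProjection f,
      (V N).starProjection f' + b • (V N).starProjection f⟫ := by
    intro N
    induction N with
    | zero =>
      have h1 : (V 0).starProjection f = 0 := by
        rw [Submodule.starProjection_apply_eq_zero_iff, Submodule.mem_orthogonal']
        exact hf0
      have h2 : (V 0).starProjection f' = 0 := by
        rw [Submodule.starProjection_apply_eq_zero_iff, Submodule.mem_orthogonal']
        intro v hv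
        rw [hR _ _ _ _ hf (hV0 v hv), inner_zero_right]
      rw [h1, h2]; simp
    | succ N ih =>
      set w := (V (N+1)).starProjection f - (V N).starProjection f with hw
      have e1 : (V (N+1)).starProjection f = (V N).starProjection f + w := by rw [hw]; abel
      have e2 : (V (N+1)).starProjection f' = (V N).starProjection f' + (- lam (N+1) • w) := by
        rw [← key N]; abel
      have horth : ∀ q ∈ V N, ⟪w, q⟫ = 0 := by
        intro q hq
        have e1 := (V (N+1)).starProjection_inner_eq_zero f q (hmono (Nat.le_succ N) hq)
        have e2 := (V N).starProjection_inner_eq_zero f q hq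
        rw [hw]
        rw [inner_sub_left] at *
        linarith
      have o1 := horth _ (Submodule.starProjection_apply_mem (V N) f)
      have o2 := horth _ (Submodule.starProjection_apply_mem (V N) f')
      have o1' := o1
      have o2' := o2
      rw [real_inner_comm] at o1' o2'
      rw [e1, e2]
      have := mul_nonneg (hlam N) (real_inner_self_nonneg (x := w))
      simp only [inner_add_left, inner_add_right, inner_smul_left, inner_smul_right, o1, o2, o1', o2',
        smul_add, conj_trivial] at ih ⊢
      nlinarith
  have t1 := Submodule.starProjection_tendsto_self (𝕜 := ℝ) V hmono f hdense
  have t2 := Submodule.starProjection_tendsto_self (𝕜 := ℝ) V hmono f' hdense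
  exact ge_of_tendsto' ((t2.add (t1.const_smul a)).inner (t2.add (t1.const_smul b))) hQ

abbrev Eu (d : ℕ) := EuclideanSpace ℝ (Fin d)
abbrev Sph (d : ℕ) := Metric.sphere (0 : Eu d) 1

/-- partial derivative -/
def pdv {d : ℕ} (i : Fin d) (f : Eu d → ℝ) (y : Eu d) : ℝ :=
  fderiv ℝ f y (EuclideanSpace.single i 1)

theorem eucLap_eq {d : ℕ} (f : Eu d → ℝ) (x : Eu d) : eucLap f x = ∑ i, pdv i (pdv i f) x := rfl

theorem ext0_of_ne {d : ℕ} (F : Sph d → ℝ) {x : Eu d} (hx : x ≠ 0) (θ : Sph d)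
    (h : (θ : Eu d) = ‖x‖⁻¹ • x) : ext0 F x = F θ := by
  unfold ext0
  rw [dif_neg hx]
  congr 1
  exact Subtype.ext h.symm

theorem ext0_zero {d : ℕ} (F : Sph d → ℝ) : ext0 F 0 = 0 := by
  unfold ext0
  rw [dif_pos rfl]

theorem sph_ne_zero {d : ℕ} (θ : Sph d) : (θ : Eu d) ≠ 0 := by
  have h : ‖(θ : Eu d)‖ = 1 := mem_sphere_zero_iff_norm.1 θ.2
  intro h0
  rw [h0] at h
  simp at h

theorem ext0_coe {d : ℕ} (F : Sph d → ℝ) (θ : Sph d) : ext0 F (θ : Eu d) = F θ := by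
  apply ext0_of_ne F (sph_ne_zero θ)
  have h : ‖(θ : Eu d)‖ = 1 := mem_sphere_zero_iff_norm.1 θ.2
  rw [h]; simp

def toSph {d : ℕ} (x : Eu d) (hx : x ≠ 0) : Sph d :=
  ⟨‖x‖⁻¹ • x, by
    simp [norm_smul, norm_ne_zero_iff.mpr hx]⟩

theorem ext0_toSph {d : ℕ} (F : Sph d → ℝ) {x : Eu d} (hx : x ≠ 0) :
    ext0 F x = F (toSph x hx) := ext0_of_ne F hx _ rfl

theorem ext0_smul {d : ℕ} (F : Sph d → ℝ) {r : ℝ} (hr : 0 < r) (x : Eu d) :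
    ext0 F (r • x) = ext0 F x := by
  by_cases hx : x = 0
  · simp [hx]
  · rw [ext0_toSph F hx]
    apply ext0_of_ne F (smul_ne_zero hr.ne' hx)
    simp only [toSph, norm_smul, Real.norm_eq_abs, abs_of_pos hr, smul_smul]
    congr 1
    field_simp

theorem pdv_smul {d : ℕ} (f : Eu d → ℝ) (r c : ℝ) (hr : r ≠ 0) (h : ∀ x, f (r • x) = c * f x)
    (i : Fin d) (x : Eu d) : pdv i f (r • x) = (r⁻¹ * c) * pdv i f x := by
  have h1 := fderiv_comp_smul (𝕜 := ℝ) (f := f) (x := x) r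
  have h2 : (fun y => f (r • y)) = fun y => c • f y := by
    funext y; simp [h y]
  rw [h2] at h1
  have h3 : fderiv ℝ (fun y => c • f y) x = c • fderiv ℝ f x := by
    have := fderiv_const_smul_field (𝕜 := ℝ) (f := f) c
    exact congrFun this x
  rw [h3] at h1
  have h4 := congrArg (fun L => L (EuclideanSpace.single i 1)) h1
  simp only [_root_.smul_apply, smul_eq_mul] at h4
  unfold pdv
  rw [mul_assoc, h4]
  field_simp

theorem eucLap_ext0_smul {d : ℕ} (F : Sph d → ℝ) {r : ℝ} (hr : 0 < r) (x : Eu d) :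
    eucLap (ext0 F) (r • x) = (r⁻¹)^2 * eucLap (ext0 F) x := by
  rw [eucLap_eq, eucLap_eq, Finset.mul_sum]
  refine Finset.sum_congr rfl fun i _ => ?_
  have h1 := pdv_smul (ext0 F) r 1 hr.ne' (fun x => by rw [ext0_smul F hr, one_mul]) i
  rw [pdv_smul (pdv i (ext0 F)) r _ hr.ne' h1]
  ring

theorem eucLap_ext0 {d : ℕ} (F : Sph d → ℝ) {x : Eu d} (hx : x ≠ 0) :
    eucLap (ext0 F) x = (‖x‖⁻¹)^2 * ext0 (sphLap F) x := by
  have hn : 0 < ‖x‖ := norm_pos_iff.2 hx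
  have h : x = ‖x‖ • ((toSph x hx : Sph d) : Eu d) := by
    simp [toSph, smul_smul, mul_inv_cancel₀ hn.ne']
  rw [ext0_toSph _ hx]
  calc eucLap (ext0 F) x = eucLap (ext0 F) (‖x‖ • ((toSph x hx : Sph d) : Eu d)) := by rw [← h]
    _ = _ := by rw [eucLap_ext0_smul F hn]; rfl

theorem isOpen_ne0 (d : ℕ) : IsOpen ({(0 : Eu d)}ᶜ) := isOpen_compl_singleton

theorem pdv_contDiffOn {d : ℕ} {f : Eu d → ℝ} (hf : ContDiffOn ℝ (⊤ : ℕ∞) f {(0 : Eu d)}ᶜ)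
    (i : Fin d) : ContDiffOn ℝ (⊤ : ℕ∞) (pdv i f) {(0 : Eu d)}ᶜ := by
  have h := hf.fderiv_of_isOpen (m := (⊤ : ℕ∞)) (isOpen_ne0 d) (by simp)
  exact h.clm_apply contDiffOn_const

theorem cdAt {d : ℕ} {f : Eu d → ℝ} (hf : ContDiffOn ℝ (⊤ : ℕ∞) f {(0 : Eu d)}ᶜ)
    {x : Eu d} (hx : x ≠ 0) : ContDiffAt ℝ (⊤ : ℕ∞) f x :=
  hf.contDiffAt ((isOpen_ne0 d).mem_nhds hx)

theorem dAt {d : ℕ} {f : Eu d → ℝ} (hf : ContDiffOn ℝ (⊤ : ℕ∞) f {(0 : Eu d)}ᶜ)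
    {x : Eu d} (hx : x ≠ 0) : DifferentiableAt ℝ f x :=
  (cdAt hf hx).differentiableAt (by simp)

theorem sum_single {d : ℕ} (x : Eu d) : x = ∑ i, x i • EuclideanSpace.single i (1:ℝ) := by
  have := (EuclideanSpace.basisFun (Fin d) ℝ).sum_repr x
  simpa using this.symm

theorem euler0 {d : ℕ} {F : Sph d → ℝ} (hF : SphSmooth F) {x : Eu d} (hx : x ≠ 0) :
    ∑ i, x i * pdv i (ext0 F) x = 0 := by
  have h1 : fderiv ℝ (ext0 F) x x = 0 := by
    have hd : HasFDerivAt (ext0 F) (fderiv ℝ (ext0 F) x) ((1:ℝ) • x) := by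
      rw [one_smul]; exact (dAt hF hx).hasFDerivAt
    have hl : HasDerivAt (fun r : ℝ => r • x) x 1 := by
      simpa using (hasDerivAt_id (1:ℝ)).smul_const x
    have h2 : HasDerivAt (fun r : ℝ => ext0 F (r • x)) (fderiv ℝ (ext0 F) x x) 1 :=
      HasFDerivAt.comp_hasDerivAt (l := ext0 F) (f := fun r : ℝ => r • x) (1:ℝ) hd hl
    have h3 : HasDerivAt (fun r : ℝ => ext0 F (r • x)) 0 1 := by
      apply (hasDerivAt_const (1:ℝ) (ext0 F x)).congr_of_eventuallyEq
      filter_upwards [lt_mem_nhds (zero_lt_one' ℝ)] with r hr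
      exact ext0_smul F hr x
    exact h2.unique h3
  have h4 : fderiv ℝ (ext0 F) x x = ∑ i, x i * pdv i (ext0 F) x := by
    conv_lhs => rw [sum_single x]
    rw [map_sum]
    simp only [map_smul, smul_eq_mul]
    rw [← sum_single x]
    rfl
  rw [← h4, h1]

/-- one-dimensional bump -/
def psi : ContDiffBump (1:ℝ) := ⟨1/4, 1/2, by norm_num, by norm_num⟩

def eta {d : ℕ} (x : Eu d) : ℝ := psi (‖x‖^2)

theorem eta_contDiff (d : ℕ) : ContDiff ℝ (⊤ : ℕ∞) (eta (d := d)) :=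
  psi.contDiff.comp (contDiff_norm_sq ℝ)

theorem eta_eq_zero {d : ℕ} {x : Eu d} (hx : 1/2 ≤ |‖x‖^2 - 1|) : eta x = 0 := by
  apply psi.zero_of_le_dist
  rw [Real.dist_eq]; exact hx

theorem eta_near_zero (d : ℕ) : ∀ᶠ x : Eu d in nhds 0, eta x = 0 := by
  have : ∀ᶠ x : Eu d in nhds 0, ‖x‖^2 < 1/2 := by
    have hc : Continuous fun x : Eu d => ‖x‖^2 := by fun_prop
    apply hc.continuousAt.eventually_lt continuousAt_const
    norm_num
  filter_upwards [this] with x hx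
  apply eta_eq_zero
  rw [abs_of_nonpos (by linarith)]
  linarith

theorem eta_hasCompactSupport (d : ℕ) : HasCompactSupport (eta (d := d)) := by
  apply HasCompactSupport.intro (isCompact_closedBall (0 : Eu d) 2)
  intro x hx
  apply eta_eq_zero
  have : 2 < ‖x‖ := by simpa using hx
  have h2 : 3 ≤ ‖x‖^2 - 1 := by nlinarith
  rw [abs_of_nonneg (by linarith)]
  linarith

theorem eta_nonneg {d : ℕ} (x : Eu d) : 0 ≤ eta x := psi.nonneg

theorem pdv_eta {d : ℕ} (i : Fin d) (x : Eu d) : pdv i eta x = deriv psi (‖x‖^2) * 2 * x i := by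
  have h1 : HasDerivAt psi (deriv psi (‖x‖^2)) (‖x‖^2) :=
    ((psi.contDiff (n := 1)).differentiable (by simp) _).hasDerivAt
  have h2 : HasFDerivAt (fun x : Eu d => ‖x‖^2) (2 • innerSL ℝ x) x := (hasStrictFDerivAt_norm_sq x).hasFDerivAt
  have h3 := h1.comp_hasFDerivAt x h2
  have h4 : HasFDerivAt eta _ x := h3
  unfold pdv
  rw [h4.fderiv]
  simp [EuclideanSpace.inner_single_right]
  ring

/-- polar coordinates -/
theorem polar {d : ℕ} (hd : 2 ≤ d) (k : ℝ → ℝ) (K : Sph d → ℝ) :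
    ∫ x : Eu d, k ‖x‖ * ext0 K x = (∫ θ, K θ ∂(sphMeasure d)) *
      ∫ r : Set.Ioi (0:ℝ), k r ∂(Measure.volumeIoiPow (d - 1)) := by
  have : Nontrivial (Eu d) := by
    have : Nonempty (Fin d) := ⟨⟨0, by omega⟩⟩
    infer_instance
  have hdim : Module.finrank ℝ (Eu d) = d := by simp
  have h1 : ∫ x : Eu d, k ‖x‖ * ext0 K x =
      ∫ x : ({(0 : Eu d)}ᶜ : Set (Eu d)), k ‖x.1‖ * ext0 K x.1 ∂((volume : Measure (Eu d)).comap (↑)) := by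
    rw [integral_subtype_comap (measurableSet_singleton _).compl fun x : Eu d ↦ k ‖x‖ * ext0 K x,
        restrict_compl_singleton]
  have h2 := (volume : Measure (Eu d)).measurePreserving_homeomorphUnitSphereProd.integral_comp
        (Homeomorph.measurableEmbedding _) (fun p => k p.2.1 * K p.1)
  rw [h1]
  have h3 : ∀ x : ({(0 : Eu d)}ᶜ : Set (Eu d)), k ‖x.1‖ * ext0 K x.1 =
      k ((homeomorphUnitSphereProd (Eu d) x).2.1) * K (homeomorphUnitSphereProd (Eu d) x).1 := by
    intro x
    have e1 : ext0 K x.1 = K (homeomorphUnitSphereProd (Eu d) x).1 := by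
      apply ext0_of_ne K x.2
      simp
    rw [e1]
    simp
  simp_rw [h3]
  rw [h2, hdim, mul_comm]
  have h4 : ∀ p : Sph d × Set.Ioi (0:ℝ), k p.2.1 * K p.1 = K p.1 * k p.2.1 := fun p => mul_comm _ _
  simp_rw [h4]
  rw [mul_comm]
  exact integral_prod_mul (μ := (volume : Measure (Eu d)).toSphere) (ν := Measure.volumeIoiPow (d-1))
    K (fun r => k r.1)

theorem integral_pdv_zero {d : ℕ} {W : Eu d → ℝ} (hW : ContDiff ℝ 1 W) (hc : HasCompactSupport W)
    (i : Fin d) : Integrable (pdv i W) ∧ ∫ x, pdv i W x = 0 := by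
  have hi : Integrable (pdv i W) := by
    apply Continuous.integrable_of_hasCompactSupport
    · exact (hW.continuous_fderiv (by simp)).clm_apply continuous_const
    · exact hc.fderiv_apply (𝕜 := ℝ) _
  refine ⟨hi, ?_⟩
  have hWi : Integrable W := hW.continuous.integrable_of_hasCompactSupport hc
  have := integral_mul_fderiv_eq_neg_fderiv_mul_of_integrable (μ := (volume : Measure (Eu d)))
    (f := fun _ : Eu d => (1:ℝ)) (g := W) (v := EuclideanSpace.single i 1)
    (by simp) (by simpa [pdv] using! hi) (by simpa using hWi) (fun _ _ => differentiableAt_const _)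
    (fun x _ => (hW.differentiable (by simp)) x)
  simpa [pdv] using this

theorem green {d : ℕ} {F G : Sph d → ℝ} (hF : SphSmooth F) (hG : SphSmooth G) :
    ∫ x : Eu d, eta x * (ext0 G x * eucLap (ext0 F) x - ext0 F x * eucLap (ext0 G) x) = 0 := by
  set f := ext0 F with hf
  set g := ext0 G with hg
  let W : Fin d → Eu d → ℝ := fun i x => eta x * (g x * pdv i f x - f x * pdv i g x)
  have hWc : ∀ i, HasCompactSupport (W i) := fun i => (eta_hasCompactSupport d).mul_right
  have hFi := fun i => pdv_contDiffOn hF i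
  have hGi := fun i => pdv_contDiffOn hG i
  have hWs : ∀ i, ContDiff ℝ 1 (W i) := by
    intro i
    rw [contDiff_iff_contDiffAt]
    intro x
    by_cases hx : x = 0
    · subst hx
      have : W i =ᶠ[nhds 0] fun _ => 0 := by
        filter_upwards [eta_near_zero d] with y hy
        simp [W, hy]
      exact contDiffAt_const.congr_of_eventuallyEq this
    · have h := (eta_contDiff d).contDiffAt.mul
        (((cdAt hG hx).mul (cdAt (hFi i) hx)).sub ((cdAt hF hx).mul (cdAt (hGi i) hx)))
      exact h.of_le (by exact_mod_cast le_top)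
  have hdiv : ∀ x, eta x * (g x * eucLap f x - f x * eucLap g x) = ∑ i, pdv i (W i) x := by
    intro x
    by_cases hx : x = 0
    · subst hx
      rw [(eta_near_zero d).self_of_nhds, zero_mul]
      symm
      apply Finset.sum_eq_zero
      intro i _
      have : W i =ᶠ[nhds 0] fun _ => 0 := by
        filter_upwards [eta_near_zero d] with y hy
        simp [W, hy]
      unfold pdv
      rw [this.fderiv_eq]
      simp
    · have hi : ∀ i, pdv i (W i) x = deriv psi (‖x‖^2) * 2 * (g x * (x i * pdv i f x) - f x * (x i * pdv i g x))
          + eta x * (g x * pdv i (pdv i f) x - f x * pdv i (pdv i g) x) := by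
        intro i
        have he := ((eta_contDiff d).differentiable (by simp) x).hasFDerivAt
        have h1 := (dAt hF hx).hasFDerivAt
        have h2 := (dAt hG hx).hasFDerivAt
        have h3 := (dAt (hFi i) hx).hasFDerivAt
        have h4 := (dAt (hGi i) hx).hasFDerivAt
        have h5 : HasFDerivAt (W i) _ x := he.mul ((h2.mul h3).sub (h1.mul h4))
        have h6 := pdv_eta i x
        conv_lhs => unfold pdv
        rw [h5.fderiv]
        simp only [_root_.add_apply, _root_.smul_apply, _root_.sub_apply, smul_eq_mul]
        change eta x * (g x * pdv i (pdv i f) x + pdv i f x * pdv i g x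
          - (f x * pdv i (pdv i g) x + pdv i g x * pdv i f x))
          + (g x * pdv i f x - f x * pdv i g x) * pdv i eta x = _
        rw [h6]
        ring
      simp_rw [hi]
      rw [Finset.sum_add_distrib, ← Finset.mul_sum, ← Finset.mul_sum, Finset.sum_sub_distrib,
        Finset.sum_sub_distrib, ← Finset.mul_sum, ← Finset.mul_sum, ← Finset.mul_sum, ← Finset.mul_sum,
        euler0 hF hx, euler0 hG hx, eucLap_eq, eucLap_eq]
      ring
  simp_rw [hdiv]
  rw [integral_finsetSum]
  · exact Finset.sum_eq_zero fun i _ => (integral_pdv_zero (hWs i) (hWc i) i).2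
  · exact fun i _ => (integral_pdv_zero (hWs i) (hWc i) i).1

theorem sphLap_continuous {d : ℕ} {F : Sph d → ℝ} (hF : SphSmooth F) : Continuous (sphLap F) := by
  have h : ContinuousOn (eucLap (ext0 F)) {(0 : Eu d)}ᶜ := by
    have : eucLap (ext0 F) = fun x => ∑ i, pdv i (pdv i (ext0 F)) x := rfl
    rw [this]
    exact continuousOn_finsetSum _ fun i _ => (pdv_contDiffOn (pdv_contDiffOn hF i) i).continuousOn
  exact h.comp_continuous continuous_subtype_val (fun θ => sph_ne_zero θ)

theorem sph_continuous {d : ℕ} {F : Sph d → ℝ} (hF : SphSmooth F) : Continuous F := by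
  have h : F = fun θ : Sph d => ext0 F (θ : Eu d) := by funext θ; rw [ext0_coe]
  rw [h]
  exact hF.continuousOn.comp_continuous continuous_subtype_val (fun θ => sph_ne_zero θ)

theorem sph_int {d : ℕ} {F : Sph d → ℝ} (hF : Continuous F) : Integrable F (sphMeasure d) := by
  have : IsFiniteMeasure (sphMeasure d) := by unfold sphMeasure; infer_instance
  exact hF.integrable_of_hasCompactSupport (HasCompactSupport.of_compactSpace F)

theorem sphLap_symm {d : ℕ} (hd : 2 ≤ d) {F G : Sph d → ℝ} (hF : SphSmooth F) (hG : SphSmooth G) :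
    ∫ θ, G θ * sphLap F θ ∂(sphMeasure d) = ∫ θ, F θ * sphLap G θ ∂(sphMeasure d) := by
  have h0 := green hF hG
  let k : ℝ → ℝ := fun r => psi (r^2) * (r⁻¹)^2
  let K : Sph d → ℝ := fun θ => G θ * sphLap F θ - F θ * sphLap G θ
  have h1 : ∀ x : Eu d, eta x * (ext0 G x * eucLap (ext0 F) x - ext0 F x * eucLap (ext0 G) x)
      = k ‖x‖ * ext0 K x := by
    intro x
    by_cases hx : x = 0
    · subst hx; simp [ext0_zero]
    · rw [eucLap_ext0 F hx, eucLap_ext0 G hx]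
      simp only [ext0_toSph _ hx, k, K, eta]
      ring
  simp_rw [h1] at h0
  rw [polar hd k K] at h0
  have hc : ∫ r : Set.Ioi (0:ℝ), k r ∂(Measure.volumeIoiPow (d - 1)) ≠ 0 := by
    intro hz
    have h2 := polar hd k (fun _ : Sph d => 1)
    rw [hz, mul_zero] at h2
    have h3 : 0 < ∫ x : Eu d, k ‖x‖ * ext0 (fun _ => 1) x := by
      have hne : Nonempty (Fin d) := ⟨⟨0, by omega⟩⟩
      have heq : ∀ x : Eu d, k ‖x‖ * ext0 (fun _ => 1) x = eta x * (‖x‖⁻¹)^2 := by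
        intro x
        by_cases hx : x = 0
        · subst hx; simp [ext0_zero]
        · rw [ext0_toSph _ hx]; simp [k, eta]
      simp_rw [heq]
      apply Continuous.integral_pos_of_hasCompactSupport_nonneg_nonzero
        (x := EuclideanSpace.single (Classical.arbitrary (Fin d)) 1)
      · rw [continuous_iff_continuousAt]
        intro x
        by_cases hx : x = 0
        · subst hx
          have : (fun x : Eu d => eta x * (‖x‖⁻¹)^2) =ᶠ[nhds 0] fun _ => 0 := by
            filter_upwards [eta_near_zero d] with y hy
            simp [hy]
          exact continuousAt_const.congr this.symm
        · exact (eta_contDiff d).continuous.continuousAt.mul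
            ((continuous_norm.continuousAt.inv₀ (norm_ne_zero_iff.2 hx)).pow 2)
      · exact (eta_hasCompactSupport d).mul_right
      · intro x
        exact mul_nonneg (eta_nonneg x) (sq_nonneg _)
      · have : psi 1 = 1 := psi.one_of_mem_closedBall (Metric.mem_closedBall_self psi.rIn_pos.le)
        simp [eta, this]
    linarith
  have hK := (mul_eq_zero.1 h0).resolve_right hc
  have hs := integral_sub (sph_int ((sph_continuous hG).mul (sphLap_continuous hF)))
    (sph_int ((sph_continuous hF).mul (sphLap_continuous hG)))
  have hdiff := hs.symm.trans hK
  exact sub_eq_zero.1 hdiff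

/-- evaluation of a polynomial -/
def ev {d : ℕ} (p : MvPolynomial (Fin d) ℝ) (x : Eu d) : ℝ := MvPolynomial.eval (fun i => x i) p

theorem ev_contDiff {d : ℕ} (p : MvPolynomial (Fin d) ℝ) : ContDiff ℝ (⊤ : ℕ∞) (ev p) := by
  induction p using MvPolynomial.induction_on with
  | C a =>
    have : ev (MvPolynomial.C a : MvPolynomial (Fin d) ℝ) = fun _ => a := by funext x; simp [ev]
    rw [this]; exact contDiff_const
  | add p q hp hq =>
    have : ev (p + q) = fun x => ev p x + ev q x := by funext x; simp [ev]
    rw [this]; exact hp.add hq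
  | mul_X p i hp =>
    have : ev (p * MvPolynomial.X i) = fun x => ev p x * x i := by funext x; simp [ev]
    rw [this]
    apply hp.mul
    fun_prop

theorem pdv_coord {d : ℕ} (i j : Fin d) (x : Eu d) :
    pdv i (fun x : Eu d => x j) x = if i = j then 1 else 0 := by
  have h : HasFDerivAt (fun x : Eu d => x j) (EuclideanSpace.proj j : Eu d →L[ℝ] ℝ) x :=
    (EuclideanSpace.proj j : Eu d →L[ℝ] ℝ).hasFDerivAt
  unfold pdv
  rw [h.fderiv]
  simp [eq_comm]

theorem pdv_mul {d : ℕ} (i : Fin d) {f g : Eu d → ℝ} {x : Eu d} (hf : DifferentiableAt ℝ f x)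
    (hg : DifferentiableAt ℝ g x) :
    pdv i (fun y => f y * g y) x = f x * pdv i g x + g x * pdv i f x := by
  have h : HasFDerivAt (fun y => f y * g y) _ x := hf.hasFDerivAt.mul hg.hasFDerivAt
  unfold pdv
  rw [h.fderiv]
  simp

theorem pdv_add {d : ℕ} (i : Fin d) {f g : Eu d → ℝ} {x : Eu d} (hf : DifferentiableAt ℝ f x)
    (hg : DifferentiableAt ℝ g x) :
    pdv i (fun y => f y + g y) x = pdv i f x + pdv i g x := by
  have h : HasFDerivAt (fun y => f y + g y) _ x := hf.hasFDerivAt.add hg.hasFDerivAt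
  unfold pdv
  rw [h.fderiv]
  simp

theorem pdv_const_mul {d : ℕ} (i : Fin d) (c : ℝ) {f : Eu d → ℝ} {x : Eu d}
    (hf : DifferentiableAt ℝ f x) :
    pdv i (fun y => c * f y) x = c * pdv i f x := by
  have h : HasFDerivAt (fun y => c * f y) _ x := hf.hasFDerivAt.const_mul c
  unfold pdv
  rw [h.fderiv]
  simp

theorem pdv_congr {d : ℕ} (i : Fin d) {f g : Eu d → ℝ} {x : Eu d} (hx : x ≠ 0)
    (h : ∀ y, y ≠ 0 → f y = g y) : pdv i f x = pdv i g x := by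
  have : f =ᶠ[nhds x] g := by
    filter_upwards [(isOpen_ne0 d).mem_nhds hx] with y hy
    exact h y hy
  unfold pdv
  rw [this.fderiv_eq]

theorem ev_diff {d : ℕ} (p : MvPolynomial (Fin d) ℝ) (x : Eu d) : DifferentiableAt ℝ (ev p) x :=
  (ev_contDiff p).differentiable (by simp) x

theorem pdv_ev {d : ℕ} (i : Fin d) (p : MvPolynomial (Fin d) ℝ) (x : Eu d) :
    pdv i (ev p) x = ev (MvPolynomial.pderiv i p) x := by
  induction p using MvPolynomial.induction_on with
  | C a =>
    have : ev (MvPolynomial.C a : MvPolynomial (Fin d) ℝ) = fun _ => a := by funext x; simp [ev]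
    rw [this]; simp [pdv, ev]
  | add p q hp hq =>
    have : ev (p + q) = fun x => ev p x + ev q x := by funext x; simp [ev]
    rw [this, pdv_add i (ev_diff p x) (ev_diff q x), hp, hq]
    simp [ev]
  | mul_X p j hp =>
    have : ev (p * MvPolynomial.X j) = fun x => ev p x * x j := by funext x; simp [ev]
    rw [this, pdv_mul i (ev_diff p x) (by fun_prop), hp, pdv_coord]
    simp only [ev, Derivation.leibniz, MvPolynomial.pderiv_X, smul_eq_mul, map_add, map_mul,
      MvPolynomial.eval_X, Pi.single_apply]
    by_cases h : i = j
    · subst h; simp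
    · have hne : ¬ j = i := fun e => h e.symm
      simp [h, hne]

/-- power of the norm -/
def Npow {d : ℕ} (s : ℝ) (x : Eu d) : ℝ := (‖x‖^2) ^ s

theorem Npow_hasFDerivAt {d : ℕ} (s : ℝ) {x : Eu d} (hx : x ≠ 0) :
    HasFDerivAt (Npow s) ((s * Npow (s - 1) x) • (2 • innerSL ℝ x)) x := by
  have h2 : HasFDerivAt (fun x : Eu d => ‖x‖^2) (2 • innerSL ℝ x) x :=
    (hasStrictFDerivAt_norm_sq x).hasFDerivAt
  have hn : ‖x‖^2 ≠ 0 := by simpa using hx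
  have h1 : HasDerivAt (fun t : ℝ => t ^ s) (s * (‖x‖^2) ^ (s - 1)) (‖x‖^2) :=
    Real.hasDerivAt_rpow_const (Or.inl hn)
  exact h1.comp_hasFDerivAt x h2

theorem pdv_evN {d : ℕ} (i : Fin d) (p : MvPolynomial (Fin d) ℝ) (s : ℝ) {x : Eu d} (hx : x ≠ 0) :
    pdv i (fun y => ev p y * Npow s y) x = ev (MvPolynomial.pderiv i p) x * Npow s x
      + ev (MvPolynomial.C (2 * s) * MvPolynomial.X i * p) x * Npow (s - 1) x := by
  rw [pdv_mul i (ev_diff p x) (Npow_hasFDerivAt s hx).differentiableAt, pdv_ev]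
  have h : pdv i (Npow s) x = 2 * s * x i * Npow (s - 1) x := by
    unfold pdv
    rw [(Npow_hasFDerivAt s hx).fderiv]
    simp [EuclideanSpace.inner_single_right]
    ring
  rw [h]
  simp [ev]
  ring

/-- restriction of a polynomial to the sphere -/
def rs {d : ℕ} (p : MvPolynomial (Fin d) ℝ) (θ : Sph d) : ℝ := ev p (θ : Eu d)

theorem ext0_rs {d : ℕ} (p : MvPolynomial (Fin d) ℝ) {x : Eu d} (hx : x ≠ 0) :
    ext0 (rs p) x = ev p (‖x‖⁻¹ • x) := by
  rw [ext0_toSph _ hx]; rfl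

theorem rs_smooth {d : ℕ} (p : MvPolynomial (Fin d) ℝ) : SphSmooth (rs p) := by
  have h : ContDiffOn ℝ (⊤ : ℕ∞) (fun x : Eu d => ev p (‖x‖⁻¹ • x)) {(0 : Eu d)}ᶜ := by
    intro x hx
    have hx' : x ≠ 0 := hx
    apply ContDiffAt.contDiffWithinAt
    exact (ev_contDiff p).contDiffAt.comp x
      (((contDiffAt_norm ℝ hx').inv (norm_ne_zero_iff.2 hx')).smul contDiffAt_id)
  exact h.congr fun x hx => ext0_rs p hx

theorem ext0_rs_hom {d n : ℕ} {p : MvPolynomial (Fin d) ℝ} (hp : p.IsHomogeneous n) {x : Eu d}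
    (hx : x ≠ 0) : ext0 (rs p) x = ev p x * Npow (-(n:ℝ)/2) x := by
  rw [ext0_rs p hx]
  have h1 : ev p (‖x‖⁻¹ • x) = (‖x‖⁻¹)^n * ev p x := by
    unfold ev
    rw [MvPolynomial.eval_eq, MvPolynomial.eval_eq, Finset.mul_sum]
    refine Finset.sum_congr rfl fun m hm => ?_
    have hdeg : ∑ i ∈ m.support, m i = n := by
      have := hp (MvPolynomial.mem_support_iff.1 hm)
      rw [← this, Finsupp.weight_apply, Finsupp.sum]
      simp
    simp only [PiLp.smul_apply, smul_eq_mul, mul_pow, Finset.prod_mul_distrib]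
    rw [Finset.prod_pow_eq_pow_sum, hdeg]
    ring
  have hn : 0 < ‖x‖ := norm_pos_iff.2 hx
  have h2 : Npow (-(n:ℝ)/2) x = (‖x‖⁻¹)^n := by
    unfold Npow
    rw [← Real.rpow_natCast ‖x‖ 2, ← Real.rpow_mul hn.le, inv_pow, ← Real.rpow_natCast ‖x‖ n,
      ← Real.rpow_neg hn.le]
    congr 1
    push_cast; ring
  rw [h1, h2, mul_comm]

def polyLap {d : ℕ} (p : MvPolynomial (Fin d) ℝ) : MvPolynomial (Fin d) ℝ :=
  ∑ i, MvPolynomial.pderiv i (MvPolynomial.pderiv i p)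

theorem sphLap_rs {d n : ℕ} {p : MvPolynomial (Fin d) ℝ} (hp : p.IsHomogeneous n) :
    sphLap (rs p) = rs (polyLap p - MvPolynomial.C ((n:ℝ) * (n + d - 2)) * p) := by
  funext θ
  set x : Eu d := (θ : Eu d) with hxd
  have hx : x ≠ 0 := sph_ne_zero θ
  have hnorm : ‖x‖ = 1 := mem_sphere_zero_iff_norm.1 θ.2
  have hN : ∀ s, Npow s x = 1 := by intro s; simp [Npow, hnorm]
  set s : ℝ := -(n:ℝ)/2 with hs
  have e1 : ∀ i, ∀ y : Eu d, y ≠ 0 → pdv i (ext0 (rs p)) y = ev (MvPolynomial.pderiv i p) y * Npow s y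
      + ev (MvPolynomial.C (2 * s) * MvPolynomial.X i * p) y * Npow (s - 1) y := by
    intro i y hy
    rw [pdv_congr i hy (fun z hz => ext0_rs_hom hp hz), pdv_evN i p s hy]
  have hdN : ∀ (q : MvPolynomial (Fin d) ℝ) (s : ℝ), DifferentiableAt ℝ (fun y => ev q y * Npow s y) x :=
    fun q s => (ev_diff q x).mul (Npow_hasFDerivAt s hx).differentiableAt
  have e2 : ∀ i, pdv i (pdv i (ext0 (rs p))) x = ev (MvPolynomial.pderiv i (MvPolynomial.pderiv i p)) x
      + 4 * s * ev (MvPolynomial.X i * MvPolynomial.pderiv i p) x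
      + 2 * s * ev p x + 4 * s * (s - 1) * ev p x * (x i)^2 := by
    intro i
    rw [pdv_congr i hx (e1 i), pdv_add i (hdN _ _) (hdN _ _), pdv_evN _ _ _ hx, pdv_evN _ _ _ hx]
    simp only [hN]
    simp [ev, Derivation.leibniz]
    ring
  have e3 : ∑ i, (x i)^2 = 1 := by
    have := EuclideanSpace.norm_sq_eq x
    simpa [hnorm] using this.symm
  have e4 : ∑ i, ev (MvPolynomial.X i * MvPolynomial.pderiv i p) x = n * ev p x := by
    have := congrArg (fun q => ev q x) hp.sum_X_mul_pderiv
    simpa [ev] using this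
  change eucLap (ext0 (rs p)) x = ev _ x
  rw [eucLap_eq]
  simp_rw [e2]
  rw [Finset.sum_add_distrib, Finset.sum_add_distrib, Finset.sum_add_distrib, ← Finset.mul_sum,
    ← Finset.mul_sum, ← Finset.mul_sum, e3, e4]
  simp [ev, polyLap]
  rw [hs]
  ring

instance sphFin (d : ℕ) : IsFiniteMeasure (sphMeasure d) := by
  unfold sphMeasure; infer_instance

abbrev HH (d : ℕ) := Lp ℝ 2 (sphMeasure d)

/-- graph of the spherical Laplacian in `L²` -/
def LapRel {d : ℕ} (u u' : HH d) : Prop :=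
  ∃ F : Sph d → ℝ, SphSmooth F ∧ u =ᵐ[sphMeasure d] F ∧ u' =ᵐ[sphMeasure d] sphLap F

theorem LapRel_symm {d : ℕ} (hd : 2 ≤ d) (u u' v v' : HH d) (h1 : LapRel u u') (h2 : LapRel v v') :
    ⟪u', v⟫ = ⟪u, v'⟫ := by
  obtain ⟨F, hF, hu, hu'⟩ := h1
  obtain ⟨G, hG, hv, hv'⟩ := h2
  rw [L2.inner_def, L2.inner_def]
  have e1 : ∫ a, ⟪u' a, v a⟫ ∂(sphMeasure d) = ∫ θ, G θ * sphLap F θ ∂(sphMeasure d) := by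
    apply integral_congr_ae
    filter_upwards [hu', hv] with θ a b
    rw [a, b]; simp
  have e2 : ∫ a, ⟪u a, v' a⟫ ∂(sphMeasure d) = ∫ θ, F θ * sphLap G θ ∂(sphMeasure d) := by
    apply integral_congr_ae
    filter_upwards [hu, hv'] with θ a b
    rw [a, b]; simp [mul_comm]
  rw [e1, e2, sphLap_symm hd hF hG]

theorem ext0_add {d : ℕ} (F G : Sph d → ℝ) (x : Eu d) :
    ext0 (fun θ => F θ + G θ) x = ext0 F x + ext0 G x := by
  by_cases hx : x = 0
  · subst hx; simp [ext0_zero]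
  · simp [ext0_toSph _ hx]

theorem smooth_add {d : ℕ} {F G : Sph d → ℝ} (hF : SphSmooth F) (hG : SphSmooth G) :
    SphSmooth (fun θ => F θ + G θ) :=
  (ContDiffOn.add hF hG).congr fun x _ => ext0_add F G x

theorem sphLap_add {d : ℕ} {F G : Sph d → ℝ} (hF : SphSmooth F) (hG : SphSmooth G) :
    sphLap (fun θ => F θ + G θ) = fun θ => sphLap F θ + sphLap G θ := by
  funext θ
  have hx := sph_ne_zero θ
  change eucLap _ (θ : Eu d) = eucLap _ (θ : Eu d) + eucLap _ (θ : Eu d)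
  rw [eucLap_eq, eucLap_eq, eucLap_eq, ← Finset.sum_add_distrib]
  refine Finset.sum_congr rfl fun i _ => ?_
  have h1 : ∀ y : Eu d, y ≠ 0 → pdv i (ext0 fun θ => F θ + G θ) y
      = pdv i (ext0 F) y + pdv i (ext0 G) y := by
    intro y hy
    rw [pdv_congr i hy (fun z _ => ext0_add F G z), pdv_add i (dAt hF hy) (dAt hG hy)]
  rw [pdv_congr i hx h1, pdv_add i (dAt (pdv_contDiffOn hF i) hx) (dAt (pdv_contDiffOn hG i) hx)]

theorem LapRel_add {d : ℕ} {u u' v v' : HH d} (h1 : LapRel u u') (h2 : LapRel v v') :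
    LapRel (u + v) (u' + v') := by
  obtain ⟨F, hF, hu, hu'⟩ := h1
  obtain ⟨G, hG, hv, hv'⟩ := h2
  refine ⟨_, smooth_add hF hG, ?_, ?_⟩
  · filter_upwards [Lp.coeFn_add u v, hu, hv] with θ a b c
    rw [a, Pi.add_apply, b, c]
  · rw [sphLap_add hF hG]
    filter_upwards [Lp.coeFn_add u' v', hu', hv'] with θ a b c
    rw [a, Pi.add_apply, b, c]

/-- coordinate functions on the sphere -/
def crd (d : ℕ) (i : Fin d) : C(Sph d, ℝ) := ⟨fun θ => (θ : Eu d) i, by fun_prop⟩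

def polyC (d : ℕ) : MvPolynomial (Fin d) ℝ →ₐ[ℝ] C(Sph d, ℝ) := MvPolynomial.aeval (crd d)

theorem polyC_apply {d : ℕ} (p : MvPolynomial (Fin d) ℝ) (θ : Sph d) : polyC d p θ = rs p θ := by
  unfold rs ev polyC
  induction p using MvPolynomial.induction_on with
  | C a => simp
  | add p q hp hq => simp [hp, hq]
  | mul_X p i hp => simp [hp, crd]

theorem polyC_dense (d : ℕ) : DenseRange (polyC d) := by
  have h := ContinuousMap.subalgebra_topologicalClosure_eq_top_of_separatesPoints (polyC d).range (by
    intro x y hxy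
    have : ∃ i, (x : Eu d) i ≠ (y : Eu d) i := by
      by_contra hcon
      push Not at hcon
      exact hxy (Subtype.ext (PiLp.ext hcon))
    obtain ⟨i, hi⟩ := this
    refine ⟨crd d i, ⟨crd d i, ⟨MvPolynomial.X i, by simp [polyC]⟩, rfl⟩, hi⟩)
  intro f
  have hf : f ∈ (polyC d).range.topologicalClosure := by rw [h]; trivial
  rw [← SetLike.mem_coe, Subalgebra.topologicalClosure_coe] at hf
  simpa using hf

def iot (d : ℕ) : MvPolynomial (Fin d) ℝ →ₗ[ℝ] HH d :=
  (ContinuousMap.toLp (E := ℝ) 2 (sphMeasure d) ℝ).toLinearMap ∘ₗ (polyC d).toLinearMap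

theorem iot_ae {d : ℕ} (p : MvPolynomial (Fin d) ℝ) : iot d p =ᵐ[sphMeasure d] rs p := by
  have := ContinuousMap.coeFn_toLp (p := 2) (𝕜 := ℝ) (sphMeasure d) (polyC d p)
  filter_upwards [this] with θ h
  rw [← polyC_apply]
  exact h

theorem iot_dense (d : ℕ) : DenseRange (iot d) := by
  have h1 : DenseRange (ContinuousMap.toLp (E := ℝ) 2 (sphMeasure d) ℝ) :=
    ContinuousMap.toLp_denseRange ℝ (sphMeasure d) ℝ (by simp)
  exact h1.comp (polyC_dense d) (ContinuousLinearMap.continuous _)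

theorem LapRel_hom {d n : ℕ} {p : MvPolynomial (Fin d) ℝ} (hp : p.IsHomogeneous n) :
    LapRel (iot d p) (iot d (polyLap p - MvPolynomial.C ((n:ℝ) * (n + d - 2)) * p)) :=
  ⟨rs p, rs_smooth p, iot_ae p, by rw [sphLap_rs hp]; exact iot_ae _⟩

def VV (d N : ℕ) : Submodule ℝ (HH d) :=
  (MvPolynomial.restrictTotalDegree (Fin d) ℝ N).map (iot d)

instance VVfin (d N : ℕ) : FiniteDimensional ℝ (VV d N) := by
  unfold VV; infer_instance

theorem iot_mem {d N : ℕ} {p : MvPolynomial (Fin d) ℝ} (hp : p.totalDegree ≤ N) :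
    iot d p ∈ VV d N :=
  Submodule.mem_map_of_mem ((MvPolynomial.mem_restrictTotalDegree _ _ _).2 hp)

theorem VV_mono (d : ℕ) : Monotone (VV d) := by
  intro M N h
  apply Submodule.map_mono
  intro p hp
  rw [MvPolynomial.mem_restrictTotalDegree] at *
  omega

theorem VV_dense (d : ℕ) : ⊤ ≤ (⨆ N, VV d N).topologicalClosure := by
  intro x _
  rw [← SetLike.mem_coe, Submodule.topologicalClosure_coe]
  refine closure_mono ?_ (iot_dense d x)
  rintro _ ⟨p, rfl⟩
  exact (le_iSup (VV d) p.totalDegree) (iot_mem le_rfl)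

def lamb (d n : ℕ) : ℝ := (n:ℝ) * (n + d - 2)

theorem polyLap_deg {d n : ℕ} {p : MvPolynomial (Fin d) ℝ} (hp : p.IsHomogeneous n) :
    (polyLap p).totalDegree ≤ n - 1 := by
  unfold polyLap
  apply MvPolynomial.totalDegree_finsetSum_le
  intro i _
  have := (hp.pderiv (i := i)).pderiv (i := i)
  exact this.totalDegree_le.trans (by omega)

theorem hV_hom {d N n : ℕ} (hn : n ≤ N + 1) {p : MvPolynomial (Fin d) ℝ} (hp : p.IsHomogeneous n) :
    ∃ v', LapRel (iot d p) v' ∧ v' + lamb d (N+1) • iot d p ∈ VV d N := by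
  refine ⟨_, LapRel_hom hp, ?_⟩
  have e : iot d (polyLap p - MvPolynomial.C ((n:ℝ) * (n + d - 2)) * p) + lamb d (N+1) • iot d p
      = iot d (polyLap p) + (lamb d (N+1) - lamb d n) • iot d p := by
    rw [map_sub, ← MvPolynomial.smul_eq_C_mul, map_smul, sub_smul]
    unfold lamb
    abel
  rw [e]
  apply Submodule.add_mem
  · exact iot_mem ((polyLap_deg hp).trans (by omega))
  · by_cases h : n = N + 1
    · subst h; simp
    · exact Submodule.smul_mem _ _ (iot_mem (hp.totalDegree_le.trans (by omega)))

theorem hV_gen {d : ℕ} (N : ℕ) (v : HH d) (hv : v ∈ VV d (N+1)) :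
    ∃ v', LapRel v v' ∧ v' + lamb d (N+1) • v ∈ VV d N := by
  obtain ⟨p, hp, rfl⟩ := hv
  have hdeg : p.totalDegree ≤ N + 1 := (MvPolynomial.mem_restrictTotalDegree _ _ _).1 hp
  rw [← MvPolynomial.sum_homogeneousComponent p, map_sum]
  apply Finset.sum_induction _ (fun v : HH d => ∃ v', LapRel v v' ∧ v' + lamb d (N+1) • v ∈ VV d N)
  · rintro a b ⟨a', ha, ha'⟩ ⟨b', hb, hb'⟩
    refine ⟨a' + b', LapRel_add ha hb, ?_⟩
    have := (VV d N).add_mem ha' hb'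
    rw [smul_add]
    convert this using 1
    abel
  · have := hV_hom (d := d) (N := N) (n := 0) (by omega) (MvPolynomial.isHomogeneous_zero (Fin d) ℝ 0)
    simpa using this
  · intro n hn
    rw [Finset.mem_range] at hn
    exact hV_hom (by omega) (MvPolynomial.homogeneousComponent_isHomogeneous n p)

theorem VV_zero {d : ℕ} {v : HH d} (hv : v ∈ VV d 0) : ∃ c, v = iot d (MvPolynomial.C c) := by
  obtain ⟨p, hp, rfl⟩ := hv
  have hdeg : p.totalDegree ≤ 0 := (MvPolynomial.mem_restrictTotalDegree _ _ _).1 hp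
  exact ⟨_, by rw [← MvPolynomial.totalDegree_eq_zero_iff_eq_C.1 (Nat.le_zero.1 hdeg)]⟩

/-- If `d ≥ 2` and `F` is a smooth function on `𝕊^{d-1}` with mean zero,
then `0 ≤ ‖ΔF + (d−1)F‖² − (d+1)⟨F, −ΔF − (d−1)F⟩`. -/
theorem sphere_poincare_lambda12 (d : ℕ) (hd : 2 ≤ d)
    (F : Metric.sphere (0 : EuclideanSpace ℝ (Fin d)) 1 → ℝ)
    (hF : SphSmooth F)
    (hmean : (∫ θ, F θ ∂(sphMeasure d)) = 0) :
    0 ≤ (∫ θ, (sphLap F θ + ((d : ℝ) - 1) * F θ) ^ 2 ∂(sphMeasure d))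
        - ((d : ℝ) + 1) *
          (∫ θ, F θ * (-sphLap F θ - ((d : ℝ) - 1) * F θ) ∂(sphMeasure d)) := by

  have hcF := sph_continuous hF
  have hcL := sphLap_continuous hF
  let f : HH d := ContinuousMap.toLp (E := ℝ) 2 (sphMeasure d) ℝ ⟨F, hcF⟩
  let f' : HH d := ContinuousMap.toLp (E := ℝ) 2 (sphMeasure d) ℝ ⟨sphLap F, hcL⟩
  have hfF : f =ᵐ[sphMeasure d] F :=
    ContinuousMap.coeFn_toLp (p := 2) (𝕜 := ℝ) (sphMeasure d) ⟨F, hcF⟩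
  have hfL : f' =ᵐ[sphMeasure d] sphLap F :=
    ContinuousMap.coeFn_toLp (p := 2) (𝕜 := ℝ) (sphMeasure d) ⟨sphLap F, hcL⟩
  have main := abstract_gap (H := HH d) LapRel (LapRel_symm hd) (VV d) (VV_mono d) (VV_dense d) (lamb d)
    ((d:ℝ) - 1) (2 * d) ?_ ?_ hV_gen f f' ⟨F, hF, hfF, hfL⟩ ?_
  · have e : ⟪f' + ((d:ℝ) - 1) • f, f' + (2 * (d:ℝ)) • f⟫ =
        ∫ θ, ((sphLap F θ + ((d : ℝ) - 1) * F θ) ^ 2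
          - ((d : ℝ) + 1) * (F θ * (-sphLap F θ - ((d : ℝ) - 1) * F θ))) ∂(sphMeasure d) := by
      rw [L2.inner_def]
      apply integral_congr_ae
      filter_upwards [hfF, hfL, Lp.coeFn_add f' (((d:ℝ) - 1) • f), Lp.coeFn_add f' ((2 * (d:ℝ)) • f),
        Lp.coeFn_smul ((d:ℝ) - 1) f, Lp.coeFn_smul (2 * (d:ℝ)) f] with θ h1 h2 h3 h4 h5 h6
      rw [h3, h4, Pi.add_apply, Pi.add_apply, h5, h6, Pi.smul_apply, Pi.smul_apply, h1, h2]
      simp only [smul_eq_mul, RCLike.inner_apply, conj_trivial]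
      ring
    rw [e, integral_sub (sph_int (by fun_prop)) (sph_int (by fun_prop)), integral_const_mul] at main
    exact main
  · intro N
    have : (lamb d (N+1) - ((d:ℝ) - 1)) * (lamb d (N+1) - 2 * d)
        = ((N:ℝ) * (N - 1)) * ((N + d) * (N + d + 1)) := by
      unfold lamb; push_cast; ring
    rw [this]
    apply mul_nonneg _ (by positivity)
    rcases Nat.eq_zero_or_pos N with h | h
    · subst h; simp
    · have : (1:ℝ) ≤ N := by exact_mod_cast h
      exact mul_nonneg (by positivity) (by linarith)
  · intro v hv
    obtain ⟨c, rfl⟩ := VV_zero hv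
    have := LapRel_hom (MvPolynomial.isHomogeneous_C (Fin d) c)
    simpa [polyLap] using this
  · intro v hv
    obtain ⟨c, rfl⟩ := VV_zero hv
    rw [L2.inner_def]
    have : ∫ a, ⟪f a, iot d (MvPolynomial.C c) a⟫ ∂(sphMeasure d) = ∫ θ, c * F θ ∂(sphMeasure d) := by
      apply integral_congr_ae
      filter_upwards [hfF, iot_ae (d := d) (MvPolynomial.C c)] with θ h1 h2
      rw [h1, h2]
      simp [rs, ev]
    rw [this, integral_const_mul, hmean, mul_zero]
end
end

section
/- Let C be a smooth closed convex curve in the plane ℝ² with length L, enclosed area A, and curvature κ > 0 (with arclength element ds). Then L² − 4πA ≤ (2π/3) ( ∫_C (1/κ) ds − L²/(2π) ). -/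
open MeasureTheory Real
open scoped RealInnerProductSpace Pointwise

noncomputable section

lemma parseval_aux (α : ℝ) (f : ℝ → ℝ) (hf : Continuous f) :
    HasSum (fun n : ℤ => ‖∫ x in α..α + 2 * π, Complex.exp (-(n * x * Complex.I)) * (f x : ℂ)‖ ^ 2)
      (2 * π * ∫ x in α..α + 2 * π, f x ^ 2) := by
  have hab : α < α + 2 * π := by linarith [Real.pi_pos]
  have hc : Continuous (fun x => (f x : ℂ)) := Complex.continuous_ofReal.comp hf
  have hL2 : MemLp (fun x => (f x : ℂ)) 2 (volume.restrict (Set.Ioc α (α + 2 * π))) := by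
    obtain ⟨C, hC⟩ := isCompact_Icc.exists_bound_of_continuousOn (s := Set.Icc α (α + 2 * π)) hc.continuousOn
    refine MemLp.of_bound hc.aestronglyMeasurable C ?_
    filter_upwards [ae_restrict_mem measurableSet_Ioc] with x hx
    exact hC x ⟨hx.1.le, hx.2⟩
  have h := (hasSum_sq_fourierCoeffOn hab hL2).mul_left ((2 * π) ^ 2)
  have hp := Real.pi_pos
  have e : ∀ (f g : ℤ → ℝ) (a b : ℝ), f = g → a = b → HasSum g b → HasSum f a := by
    rintro f g a b rfl rfl h; exact h
  refine e _ _ _ _ ?_ ?_ h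
  · funext n
    rw [fourierCoeffOn_eq_integral]
    have : ∀ x : ℝ, (fourier (-n) (x : AddCircle (α + 2 * π - α)) : ℂ) • (f x : ℂ)
        = Complex.exp (-(n * x * Complex.I)) * (f x : ℂ) := by
      intro x
      rw [fourier_coe_apply, smul_eq_mul]
      congr 2
      push_cast
      have : (π : ℂ) ≠ 0 := by exact_mod_cast hp.ne'
      have h2 : (α + 2 * π - α : ℂ) ≠ 0 := by
        rw [add_sub_cancel_left]; simp [this]
      field_simp
      ring
    simp_rw [this]
    rw [norm_smul, add_sub_cancel_left, Real.norm_of_nonneg (by positivity), mul_pow (1 / (2 * π)), ← mul_assoc]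
    have : (2 * π) ^ 2 * (1 / (2 * π)) ^ 2 = 1 := by field_simp
    rw [this, one_mul]
  · simp only [add_sub_cancel_left, Complex.norm_real, Real.norm_eq_abs, sq_abs, smul_eq_mul]
    field_simp

lemma coeff_aux (α : ℝ) (h h1 ρ : ℝ → ℝ) (hρ : Continuous ρ)
    (hh : ∀ x, HasDerivAt h (h1 x) x) (hh1 : ∀ x, HasDerivAt h1 (ρ x - h x) x)
    (hp : h (α + 2 * π) = h α) (hp1 : h1 (α + 2 * π) = h1 α) (n : ℤ) :
    (∫ x in α..α + 2 * π, Complex.exp (-(n * x * Complex.I)) * ((ρ x + 3 / 2 * h x : ℝ) : ℂ))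
     = ((5 / 2 - n ^ 2 : ℝ) : ℂ) *
      ∫ x in α..α + 2 * π, Complex.exp (-(n * x * Complex.I)) * (h x : ℂ) := by
  have hcont : Continuous h := continuous_iff_continuousAt.2 fun x => (hh x).continuousAt
  have hE : ∀ x : ℝ, HasDerivAt (fun x : ℝ => Complex.exp (-(n * x * Complex.I)))
      (Complex.exp (-(n * x * Complex.I)) * (-(n * 1 * Complex.I))) x := by
    intro x
    exact (((hasDerivAt_id x).ofReal_comp.const_mul (n : ℂ)).mul_const Complex.I).neg.cexp
  have key : ∀ x : ℝ, HasDerivAt (fun x : ℝ => Complex.exp (-(n * x * Complex.I)) *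
      ((h1 x : ℂ) + n * Complex.I * (h x : ℂ)))
      (Complex.exp (-(n * x * Complex.I)) * ((ρ x + 3 / 2 * h x : ℝ) : ℂ) -
        ((5 / 2 - n ^ 2 : ℝ) : ℂ) * (Complex.exp (-(n * x * Complex.I)) * (h x : ℂ))) x := by
    intro x
    have := (hE x).mul ((hh1 x).ofReal_comp.add ((hh x).ofReal_comp.const_mul (n * Complex.I)))
    refine this.congr_deriv ?_
    simp only [Pi.add_apply]
    push_cast
    have hI : Complex.I ^ 2 = -1 := Complex.I_sq
    linear_combination (-Complex.exp (-(n * x * Complex.I)) * n ^ 2 * h x) * hI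
  have c1 : Continuous fun x : ℝ => Complex.exp (-(n * x * Complex.I)) * ((ρ x + 3 / 2 * h x : ℝ) : ℂ) := by
    fun_prop
  have c2 : Continuous fun x : ℝ => ((5 / 2 - n ^ 2 : ℝ) : ℂ) * (Complex.exp (-(n * x * Complex.I)) * (h x : ℂ)) := by
    fun_prop
  have := intervalIntegral.integral_eq_sub_of_hasDerivAt (a := α) (b := α + 2 * π) (fun x _ => key x)
    ((c1.sub c2).intervalIntegrable _ _)
  rw [intervalIntegral.integral_sub (c1.intervalIntegrable _ _) (c2.intervalIntegrable _ _),
    intervalIntegral.integral_const_mul, hp, hp1] at this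
  have he : Complex.exp (-(n * ((α + 2 * π : ℝ) : ℂ) * Complex.I)) = Complex.exp (-(n * α * Complex.I)) := by
    rw [Complex.exp_eq_exp_iff_exists_int]
    refine ⟨-n, ?_⟩
    push_cast; ring
  rw [he, sub_self] at this
  exact sub_eq_zero.1 this

lemma wirtinger_aux (α : ℝ) (h h1 ρ : ℝ → ℝ) (hρ : Continuous ρ)
    (hh : ∀ x, HasDerivAt h (h1 x) x) (hh1 : ∀ x, HasDerivAt h1 (ρ x - h x) x)
    (hp : h (α + 2 * π) = h α) (hp1 : h1 (α + 2 * π) = h1 α) :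
    4 * (∫ x in α..α + 2 * π, ρ x) ^ 2 ≤
      2 * π * ((∫ x in α..α + 2 * π, ρ x * ρ x) + 3 * ∫ x in α..α + 2 * π, h x * ρ x) := by
  have hcont : Continuous h := continuous_iff_continuousAt.2 fun x => (hh x).continuousAt
  have s1 := parseval_aux α (fun x => ρ x + 3 / 2 * h x) (by fun_prop)
  have s2 := (parseval_aux α h hcont).mul_left (9 / 4)
  have s := s1.sub s2
  simp_rw [coeff_aux α h h1 ρ hρ hh hh1 hp hp1, norm_mul, mul_pow, Complex.norm_real,
    Real.norm_eq_abs, sq_abs, ← sub_mul] at s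
  have h0 := le_hasSum s 0 (fun n _ => by
    refine mul_nonneg ?_ (sq_nonneg _)
    have e : ((5 / 2 - n ^ 2 : ℝ) ^ 2 - 9 / 4) = (((n ^ 2 - 1) * (n ^ 2 - 4) : ℤ) : ℝ) := by
      push_cast; ring
    rw [e]
    apply Int.cast_nonneg
    by_cases h1 : n ^ 2 ≤ 1
    · nlinarith
    · have : 2 ≤ |n| := by
        by_contra hc
        apply h1
        have : |n| ≤ 1 := by omega
        nlinarith [sq_abs n, abs_nonneg n]
      have : 4 ≤ n ^ 2 := by nlinarith [sq_abs n]
      nlinarith)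
  have e1 : (∫ x in α..α + 2 * π, h x) = ∫ x in α..α + 2 * π, ρ x := by
    have := intervalIntegral.integral_eq_sub_of_hasDerivAt (a := α) (b := α + 2 * π)
      (fun x _ => hh1 x) ((hρ.sub hcont).intervalIntegrable _ _)
    rw [intervalIntegral.integral_sub (hρ.intervalIntegrable _ _) (hcont.intervalIntegrable _ _), hp1] at this
    linarith
  have e2 : (∫ x in α..α + 2 * π, (ρ x + 3 / 2 * h x) ^ 2) =
      (∫ x in α..α + 2 * π, ρ x * ρ x) + 3 * (∫ x in α..α + 2 * π, h x * ρ x)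
        + 9 / 4 * ∫ x in α..α + 2 * π, h x ^ 2 := by
    rw [← intervalIntegral.integral_const_mul, ← intervalIntegral.integral_const_mul,
      ← intervalIntegral.integral_add, ← intervalIntegral.integral_add]
    · congr 1; funext x; ring
    all_goals exact Continuous.intervalIntegrable (by fun_prop) _ _
  rw [e2] at h0
  simp only [Int.cast_zero, zero_mul, neg_zero, Complex.exp_zero, one_mul,
    intervalIntegral.integral_ofReal, Complex.norm_real, Real.norm_eq_abs, sq_abs, e1] at h0
  nlinarith [h0]

lemma loop_aux (x y r : ℝ → ℝ) (hr : ∀ t, 0 < r t)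
    (hx : ∀ t, HasDerivAt x (r t * cos t) t) (hy : ∀ t, HasDerivAt y (r t * sin t) t)
    (hy0 : y (2 * π) = y 0) (hx0 : x 0 ≤ x (2 * π)) :
    ∃ u v, 0 ≤ u ∧ u < v ∧ v ≤ 2 * π ∧ x u = x v ∧ y u = y v := by
  have hp := Real.pi_pos
  have cx : Continuous x := continuous_iff_continuousAt.2 fun t => (hx t).continuousAt
  have cy : Continuous y := continuous_iff_continuousAt.2 fun t => (hy t).continuousAt
  have m1 : StrictMonoOn y (Set.Icc 0 π) := by
    apply strictMonoOn_of_deriv_pos (convex_Icc _ _) cy.continuousOn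
    intro t ht
    rw [interior_Icc] at ht
    rw [(hy t).deriv]
    exact mul_pos (hr t) (sin_pos_of_pos_of_lt_pi ht.1 ht.2)
  have m2 : StrictAntiOn y (Set.Icc π (2 * π)) := by
    apply strictAntiOn_of_deriv_neg (convex_Icc _ _) cy.continuousOn
    intro t ht
    rw [interior_Icc] at ht
    rw [(hy t).deriv]
    refine mul_neg_of_pos_of_neg (hr t) ?_
    have := sin_pos_of_pos_of_lt_pi (x := t - π) (by linarith [ht.1]) (by linarith [ht.2])
    rw [sin_sub_pi] at this
    linarith
  have m3 : StrictAntiOn x (Set.Icc (π / 2) (3 * π / 2)) := by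
    apply strictAntiOn_of_deriv_neg (convex_Icc _ _) cx.continuousOn
    intro t ht
    rw [interior_Icc] at ht
    rw [(hx t).deriv]
    refine mul_neg_of_pos_of_neg (hr t) ?_
    exact cos_neg_of_pi_div_two_lt_of_lt ht.1 (by linarith [ht.2])
  -- the reflection
  have ex : ∀ u : Set.Icc (0 : ℝ) π, ∃ v : Set.Icc π (2 * π), y v = y u := by
    rintro ⟨u, hu⟩
    have a1 : y (2 * π) ≤ y u := by
      rw [hy0]; exact m1.monotoneOn ⟨le_rfl, hp.le⟩ hu hu.1
    have a2 : y u ≤ y π := m1.monotoneOn hu ⟨hp.le, le_rfl⟩ hu.2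
    obtain ⟨v, hv, e⟩ := intermediate_value_Icc' (by linarith : π ≤ 2 * π) cy.continuousOn ⟨a1, a2⟩
    exact ⟨⟨v, hv⟩, e⟩
  choose φ hφ using ex
  have emb : Topology.IsClosedEmbedding (fun v : Set.Icc π (2 * π) => y v) := by
    apply Continuous.isClosedEmbedding (by fun_prop)
    intro a b hab
    exact Subtype.ext (m2.injOn a.2 b.2 hab)
  have cφ : Continuous φ := by
    rw [emb.isInducing.continuous_iff]
    have : (fun v : Set.Icc π (2 * π) => y v) ∘ φ = fun u : Set.Icc (0 : ℝ) π => y u := funext hφ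
    rw [this]; fun_prop
  let D : Set.Icc (0 : ℝ) π → ℝ := fun u => x (φ u) - x u
  have cD : Continuous D := by
    have : Continuous fun u => ((φ u : ℝ)) := continuous_subtype_val.comp cφ
    fun_prop
  -- value at zero
  have hφ0 : (φ ⟨0, le_rfl, hp.le⟩ : ℝ) = 2 * π := by
    apply m2.injOn (φ _).2 ⟨by linarith, le_rfl⟩
    rw [hφ, hy0]
  have hφπ : (φ ⟨π, hp.le, le_rfl⟩ : ℝ) = π := by
    apply m2.injOn (φ _).2 ⟨le_rfl, by linarith⟩
    rw [hφ]
  have D0 : 0 ≤ D ⟨0, le_rfl, hp.le⟩ := by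
    simp only [D, hφ0]; linarith
  -- pick v0 near π, on the left branch
  obtain ⟨u0, hu0, hD⟩ : ∃ u0 : Set.Icc (0 : ℝ) π, (u0 : ℝ) < π ∧ D u0 < 0 := by
    have cφ' : Continuous fun u => ((φ u : ℝ)) := continuous_subtype_val.comp cφ
    have o : IsOpen {u : Set.Icc (0 : ℝ) π | (φ u : ℝ) < 3 * π / 2} :=
      isOpen_lt cφ' continuous_const
    have mem : (⟨π, hp.le, le_rfl⟩ : Set.Icc (0 : ℝ) π) ∈ {u : Set.Icc (0 : ℝ) π | (φ u : ℝ) < 3 * π / 2} := by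
      simp only [Set.mem_ofPred_eq, hφπ]; linarith
    obtain ⟨ε, hε, hb⟩ := Metric.isOpen_iff.1 o _ mem
    let u1 : ℝ := max (π / 2) (π - ε / 2)
    have l1 : u1 < π := max_lt (by linarith) (by linarith)
    have l2 : π / 2 ≤ u1 := le_max_left _ _
    have l3 : π - ε / 2 ≤ u1 := le_max_right _ _
    have hm : (⟨u1, by linarith, l1.le⟩ : Set.Icc (0 : ℝ) π) ∈ Metric.ball (⟨π, hp.le, le_rfl⟩ : Set.Icc (0 : ℝ) π) ε := by
      rw [Metric.mem_ball, Subtype.dist_eq, Real.dist_eq, abs_lt]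
      constructor <;> simp only <;> linarith
    have h3 : (φ ⟨u1, by linarith, l1.le⟩ : ℝ) < 3 * π / 2 := hb hm
    have h4 := (φ ⟨u1, by linarith, l1.le⟩).2.1
    refine ⟨⟨u1, by linarith, l1.le⟩, l1, ?_⟩
    have := m3 (a := u1) (b := φ ⟨u1, by linarith, l1.le⟩) ⟨l2, by linarith⟩ ⟨by linarith, h3.le⟩ (by linarith)
    simp only [D]; linarith
  -- IVT
  have pc : IsPreconnected (Set.Iic u0) := by
    have : Set.Iic u0 = Set.Icc ⟨0, le_rfl, hp.le⟩ u0 := by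
      ext t; simp only [Set.mem_Iic, Set.mem_Icc]
      exact ⟨fun h => ⟨t.2.1, h⟩, fun h => h.2⟩
    rw [this]
    have : Fact ((0 : ℝ) ≤ π) := ⟨hp.le⟩
    exact isPreconnected_Icc
  obtain ⟨u, hu, hu'⟩ := pc.intermediate_value (a := u0) (b := ⟨0, le_rfl, hp.le⟩) (Set.mem_Iic.2 le_rfl) (Set.mem_Iic.2 u0.2.1)
    cD.continuousOn ⟨hD.le, D0⟩
  refine ⟨u, φ u, u.2.1, ?_, (φ u).2.2, ?_, (hφ u).symm⟩
  · have : (u : ℝ) ≤ u0 := hu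
    linarith [(φ u).2.1]
  · simp only [D] at hu'; linarith

lemma turning_aux (X Y ρ : ℝ → ℝ) (P : ℝ) (hP : 2 * π < P) (hρ : ∀ t, 0 < ρ t)
    (hX : ∀ t, HasDerivAt X (ρ t * cos t) t) (hY : ∀ t, HasDerivAt Y (ρ t * sin t) t)
    (pX : Function.Periodic X P) (pY : Function.Periodic Y P)
    (pc : Function.Periodic cos P) (ps : Function.Periodic sin P)
    (inj : ∀ u v, u < v → v < u + P → X u = X v → Y u = Y v → False) : False := by
  have hp := Real.pi_pos
  have cX : Continuous X := continuous_iff_continuousAt.2 fun t => (hX t).continuousAt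
  have cY : Continuous Y := continuous_iff_continuousAt.2 fun t => (hY t).continuousAt
  let h : ℝ → ℝ := fun t => X t * sin t - Y t * cos t
  let h1 : ℝ → ℝ := fun t => X t * cos t + Y t * sin t
  have dh : ∀ t, HasDerivAt h (h1 t) t := by
    intro t
    refine (((hX t).mul (hasDerivAt_sin t)).sub ((hY t).mul (hasDerivAt_cos t))).congr_deriv ?_
    show _ = X t * cos t + Y t * sin t
    ring
  have ch : Continuous h := by fun_prop
  have ph : Function.Periodic h P := by
    intro t; simp only [h, pX t, pY t, pc t, ps t]
  let H : ℝ → ℝ := fun t => ∫ s in (0 : ℝ)..t, h s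
  have dH : ∀ t, HasDerivAt H (h t) t := fun t => ch.integral_hasStrictDerivAt 0 t |>.hasDerivAt
  let q : ℝ → ℝ := fun t => H (t + 2 * π) - H t
  let p : ℝ → ℝ := fun t => h (t + 2 * π) - h t
  let p1 : ℝ → ℝ := fun t => h1 (t + 2 * π) - h1 t
  have dq : ∀ t, HasDerivAt q (p t) t := fun t => ((dH (t + 2 * π)).comp_add_const t (2 * π)).sub (dH t)
  have dp : ∀ t, HasDerivAt p (p1 t) t := fun t => ((dh (t + 2 * π)).comp_add_const t (2 * π)).sub (dh t)
  have cq : Continuous q := continuous_iff_continuousAt.2 fun t => (dq t).continuousAt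
  have pq : Function.Periodic q P := by
    intro t
    have e : ∀ t, q t = ∫ s in t..(t + 2 * π), h s := by
      intro t
      exact intervalIntegral.integral_interval_sub_left (ch.intervalIntegrable _ _) (ch.intervalIntegrable _ _)
    rw [e, e]
    have := intervalIntegral.integral_comp_add_right (a := t) (b := t + 2 * π) h P
    rw [show t + P + 2 * π = t + 2 * π + P by ring, ← this]
    simp only [ph _]
  obtain ⟨a, -, ha⟩ := isCompact_Icc.exists_isMinOn (s := Set.Icc (0 : ℝ) P)
    ⟨0, le_rfl, by linarith⟩ cq.continuousOn
  have hmin : ∀ t, q a ≤ q t := by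
    intro t
    obtain ⟨s, hs, e⟩ := pq.exists_mem_Ico₀ (by linarith) t
    rw [e]; exact ha ⟨hs.1, hs.2.le⟩
  have lmin : IsLocalMin q a := Filter.Eventually.of_forall hmin
  have p0 : p a = 0 := lmin.hasDerivAt_eq_zero (dq a)
  have edq : deriv q = p := funext fun t => (dq t).deriv
  have hp1 : 0 ≤ p1 a := by
    by_contra hc
    push Not at hc
    have lmax : IsLocalMax q a := by
      apply isLocalMax_of_deriv_deriv_neg _ _ cq.continuousAt
      · rw [edq, (dp a).deriv]; exact hc
      · rw [edq, p0]
    have ec : q =ᶠ[nhds a] fun _ => q a := by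
      filter_upwards [lmax] with t ht
      exact le_antisymm ht (hmin t)
    have := ec.deriv.deriv_eq
    rw [edq, (dp a).deriv] at this
    simp at this
    linarith
  obtain ⟨u, v, hu, huv, hv, e1, e2⟩ := loop_aux
    (fun t => X (a + t) * cos a + Y (a + t) * sin a)
    (fun t => Y (a + t) * cos a - X (a + t) * sin a) (fun t => ρ (a + t)) (fun t => hρ _)
    (fun t => by
      have d1 := (hX (a + t)).comp_const_add a t
      have d2 := (hY (a + t)).comp_const_add a t
      refine ((d1.mul_const (cos a)).add (d2.mul_const (sin a))).congr_deriv ?_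
      have : cos t = cos (a + t) * cos a + sin (a + t) * sin a := by
        rw [← cos_sub]; congr 1; ring
      rw [this]; ring)
    (fun t => by
      have d1 := (hX (a + t)).comp_const_add a t
      have d2 := (hY (a + t)).comp_const_add a t
      refine ((d2.mul_const (cos a)).sub (d1.mul_const (sin a))).congr_deriv ?_
      have : sin t = sin (a + t) * cos a - cos (a + t) * sin a := by
        rw [← sin_sub]; congr 1; ring
      rw [this]; ring)
    (by
      simp only [p, h, sin_add_two_pi, cos_add_two_pi] at p0
      simp only [add_zero]; linarith)
    (by
      simp only [p1, h1, sin_add_two_pi, cos_add_two_pi] at hp1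
      simp only [add_zero]; linarith)
  have sc := sin_sq_add_cos_sq a
  refine inj (a + u) (a + v) (by linarith) (by linarith) ?_ ?_
  · linear_combination (cos a) * e1 - (sin a) * e2 - (X (a + u) - X (a + v)) * sc
  · linear_combination (sin a) * e1 + (cos a) * e2 - (Y (a + u) - Y (a + v)) * sc

/-- Lin–Tsai type inequality. Let `C` be a smooth closed convex curve in
`ℝ²`, parametrized by arclength by `γ` with period `L` (its length), simple, with
positive curvature `κ = det(γ', γ'')`, and enclosed (signed) area
`A = (1/2)∮ (γ₁ γ₂' − γ₂ γ₁')`.  Then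
`L² − 4πA ≤ (2π/3) (∫_C κ⁻¹ ds − L²/(2π))`. -/
theorem isoperimetric_deficit_upper_bound (L A : ℝ) (hL : 0 < L)
    (γ : ℝ → ℝ × ℝ) (hγ : ContDiff ℝ (⊤ : ℕ∞) γ)
    (hper : Function.Periodic γ L)
    (hsimple : Set.InjOn γ (Set.Ico 0 L))
    (hunit : ∀ s : ℝ, ((deriv γ s).1) ^ 2 + ((deriv γ s).2) ^ 2 = 1)
    (hconvex : ∀ s : ℝ,
      0 < (deriv γ s).1 * (deriv (deriv γ) s).2 - (deriv γ s).2 * (deriv (deriv γ) s).1)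
    (hA : A = (1 / 2) *
      ∫ s in (0 : ℝ)..L, ((γ s).1 * (deriv γ s).2 - (γ s).2 * (deriv γ s).1)) :
    L ^ 2 - 4 * π * A ≤
      (2 * π / 3) *
        ((∫ s in (0 : ℝ)..L,
            ((deriv γ s).1 * (deriv (deriv γ) s).2 -
              (deriv γ s).2 * (deriv (deriv γ) s).1)⁻¹) - L ^ 2 / (2 * π)) := by
  obtain ⟨hγd, hγ'⟩ := contDiff_infty_iff_deriv.1 hγ
  obtain ⟨hγd', hγ''⟩ := contDiff_infty_iff_deriv.1 hγ'
  have c2 : Continuous (deriv (deriv γ)) := hγ''.continuous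
  have c1 : Continuous (deriv γ) := hγ'.continuous
  have c0 : Continuous γ := hγ.continuous
  have hp := Real.pi_pos
  let a : ℝ → ℝ := fun s => (deriv γ s).1
  let b : ℝ → ℝ := fun s => (deriv γ s).2
  let a' : ℝ → ℝ := fun s => (deriv (deriv γ) s).1
  let b' : ℝ → ℝ := fun s => (deriv (deriv γ) s).2
  let κ : ℝ → ℝ := fun s => a s * b' s - b s * a' s
  have da : ∀ s, HasDerivAt a (a' s) s := fun s =>
    (ContinuousLinearMap.fst ℝ ℝ ℝ).hasFDerivAt.comp_hasDerivAt s (hγd' s).hasDerivAt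
  have db : ∀ s, HasDerivAt b (b' s) s := fun s =>
    (ContinuousLinearMap.snd ℝ ℝ ℝ).hasFDerivAt.comp_hasDerivAt s (hγd' s).hasDerivAt
  have dx : ∀ s, HasDerivAt (fun s => (γ s).1) (a s) s := fun s =>
    (ContinuousLinearMap.fst ℝ ℝ ℝ).hasFDerivAt.comp_hasDerivAt s (hγd s).hasDerivAt
  have dy : ∀ s, HasDerivAt (fun s => (γ s).2) (b s) s := fun s =>
    (ContinuousLinearMap.snd ℝ ℝ ℝ).hasFDerivAt.comp_hasDerivAt s (hγd s).hasDerivAt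
  have hab : ∀ s, a s ^ 2 + b s ^ 2 = 1 := hunit
  have hκ : ∀ s, 0 < κ s := hconvex
  have cκ : Continuous κ := by fun_prop
  have orth : ∀ s, a s * a' s + b s * b' s = 0 := by
    intro s
    have h1 := ((da s).pow 2).add ((db s).pow 2)
    have h2 : HasDerivAt (a ^ 2 + b ^ 2) 0 s := by
      have : a ^ 2 + b ^ 2 = fun _ => (1 : ℝ) := funext hab
      rw [this]; exact hasDerivAt_const _ _
    have := h1.unique h2
    simp at this
    linarith
  have ea : ∀ s, a' s = -(κ s * b s) := by
    intro s
    show a' s = -((a s * b' s - b s * a' s) * b s)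
    linear_combination (-(a' s)) * hab s + a s * orth s
  have eb : ∀ s, b' s = κ s * a s := by
    intro s
    show b' s = (a s * b' s - b s * a' s) * a s
    linear_combination (-(b' s)) * hab s + b s * orth s
  -- the angle
  obtain ⟨θ₀, hc0, hs0⟩ : ∃ θ₀ : ℝ, a 0 = cos θ₀ ∧ b 0 = sin θ₀ := by
    refine ⟨Complex.arg ⟨a 0, b 0⟩, ?_, ?_⟩
    · have hn : ‖(⟨a 0, b 0⟩ : ℂ)‖ = 1 := by
        rw [Complex.norm_def, Complex.normSq_mk, Real.sqrt_eq_one]; linarith [hab 0]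
      have := Complex.norm_mul_cos_arg ⟨a 0, b 0⟩
      rw [hn, one_mul] at this
      exact this.symm
    · have hn : ‖(⟨a 0, b 0⟩ : ℂ)‖ = 1 := by
        rw [Complex.norm_def, Complex.normSq_mk, Real.sqrt_eq_one]; linarith [hab 0]
      have := Complex.norm_mul_sin_arg ⟨a 0, b 0⟩
      rw [hn, one_mul] at this
      exact this.symm
  let θ : ℝ → ℝ := fun s => θ₀ + ∫ t in (0 : ℝ)..s, κ t
  have dθ : ∀ s, HasDerivAt θ (κ s) s := fun s =>
    ((cκ.integral_hasStrictDerivAt 0 s).hasDerivAt).const_add θ₀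
  have θ0 : θ 0 = θ₀ := by simp [θ]
  have dcos : ∀ s, HasDerivAt (fun s => cos (θ s)) (-sin (θ s) * κ s) s := fun s => (dθ s).cos
  have dsin : ∀ s, HasDerivAt (fun s => sin (θ s)) (cos (θ s) * κ s) s := fun s => (dθ s).sin
  have k1 : ∀ s, a s * cos (θ s) + b s * sin (θ s) = 1 := by
    have d : ∀ s, HasDerivAt (fun s => a s * cos (θ s) + b s * sin (θ s)) 0 s := by
      intro s
      refine (((da s).mul (dcos s)).add ((db s).mul (dsin s))).congr_deriv ?_
      rw [ea, eb]; ring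
    intro s
    have := is_const_of_deriv_eq_zero (fun s => (d s).differentiableAt) (fun s => (d s).deriv) s 0
    rw [this, θ0, ← hc0, ← hs0]; linarith [hab 0]
  have k2 : ∀ s, b s * cos (θ s) - a s * sin (θ s) = 0 := by
    have d : ∀ s, HasDerivAt (fun s => b s * cos (θ s) - a s * sin (θ s)) 0 s := by
      intro s
      refine (((db s).mul (dcos s)).sub ((da s).mul (dsin s))).congr_deriv ?_
      rw [ea, eb]; ring
    intro s
    have := is_const_of_deriv_eq_zero (fun s => (d s).differentiableAt) (fun s => (d s).deriv) s 0
    rw [this, θ0, ← hc0, ← hs0]; ring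
  have ha : ∀ s, a s = cos (θ s) := by
    intro s
    linear_combination (cos (θ s)) * k1 s - (sin (θ s)) * k2 s - a s * sin_sq_add_cos_sq (θ s)
  have hb : ∀ s, b s = sin (θ s) := by
    intro s
    linear_combination (sin (θ s)) * k1 s + (cos (θ s)) * k2 s - b s * sin_sq_add_cos_sq (θ s)
  -- periodicity
  have pder : ∀ f : ℝ → ℝ × ℝ, Function.Periodic f L → Function.Periodic (deriv f) L := by
    intro f hf s
    rw [← deriv_comp_add_const]
    congr 1
    exact funext hf
  have pγ1 := pder γ hper
  have pγ2 := pder _ pγ1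
  have pκ : Function.Periodic κ L := by
    intro s; simp only [κ, a, b, a', b', pγ1 s, pγ2 s]
  obtain ⟨K, hK⟩ : ∃ K, K = ∫ t in (0 : ℝ)..L, κ t := ⟨_, rfl⟩
  have hKpos : 0 < K := by
    rw [hK]
    exact intervalIntegral.intervalIntegral_pos_of_pos (cκ.intervalIntegrable _ _) hκ hL
  have θper : ∀ s, θ (s + L) = θ s + K := by
    intro s
    have h1 : (∫ t in (0 : ℝ)..(s + L), κ t) = (∫ t in (0 : ℝ)..s, κ t) + ∫ t in s..(s + L), κ t :=
      (intervalIntegral.integral_add_adjacent_intervals (cκ.intervalIntegrable _ _)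
        (cκ.intervalIntegrable _ _)).symm
    have h2 := pκ.intervalIntegral_add_eq s 0
    rw [zero_add] at h2
    simp only [θ, h1, h2, hK]; ring
  have cθ : Continuous θ := continuous_iff_continuousAt.2 fun t => (dθ t).continuousAt
  have mθ : StrictMono θ := strictMono_of_hasDerivAt_pos dθ hκ
  have sθ : Function.Surjective θ := by
    have pg : Function.Periodic (fun s => θ s - K / L * s) L := by
      intro s
      simp only [θper]
      field_simp
      ring
    have hn : ∀ n : ℤ, θ (n * L) = θ₀ + n * K := by
      intro n
      have := pg.int_mul_eq n
      simp only [θ0, mul_zero, sub_zero] at this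
      have e : K / L * (n * L) = n * K := by field_simp
      linarith
    intro y
    obtain ⟨n, hn1⟩ := exists_int_gt ((y - θ₀) / K)
    obtain ⟨m, hm1⟩ := exists_int_lt ((y - θ₀) / K)
    rw [div_lt_iff₀ hKpos] at hn1
    rw [lt_div_iff₀ hKpos] at hm1
    exact mem_range_of_exists_le_of_exists_ge cθ ⟨m * L, by rw [hn]; linarith⟩
      ⟨n * L, by rw [hn]; linarith⟩
  -- total curvature is a multiple of 2π
  have ccosK : cos K = 1 := by
    have h1 : cos (θ₀ + K) = cos θ₀ := by
      rw [← θ0, ← θper, ← ha, ← ha]; simp only [a, pγ1 0]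
    have h2 : sin (θ₀ + K) = sin θ₀ := by
      rw [← θ0, ← θper, ← hb, ← hb]; simp only [b, pγ1 0]
    have : cos K = cos (θ₀ + K) * cos θ₀ + sin (θ₀ + K) * sin θ₀ := by
      rw [← cos_sub]; congr 1; ring
    rw [this, h1, h2]; linarith [sin_sq_add_cos_sq θ₀]
  obtain ⟨m, hm⟩ := (Real.cos_eq_one_iff K).1 ccosK
  have hmpos : 0 < m := by
    by_contra hc
    have : (m : ℝ) ≤ 0 := by exact_mod_cast not_lt.1 hc
    nlinarith
  -- inverse
  let e := mθ.orderIsoOfSurjective θ sθ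
  let σ : ℝ → ℝ := fun t => e.symm t
  have cσ : Continuous σ := e.symm.continuous
  have mσ : StrictMono σ := e.symm.strictMono
  have θσ : ∀ t, θ (σ t) = t := fun t => e.apply_symm_apply t
  have σθ : ∀ t, σ (θ t) = t := fun t => e.symm_apply_apply t
  let ρ : ℝ → ℝ := fun t => (κ (σ t))⁻¹
  have hρ : ∀ t, 0 < ρ t := fun t => inv_pos.2 (hκ _)
  have cρ : Continuous ρ := (cκ.comp cσ).inv₀ fun t => (hκ _).ne'
  have dσ : ∀ t, HasDerivAt σ (ρ t) t := fun t =>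
    HasDerivAt.of_local_left_inverse cσ.continuousAt (dθ (σ t)) (hκ _).ne'
      (Filter.Eventually.of_forall θσ)
  have σper : ∀ t, σ (t + K) = σ t + L := by
    intro t
    apply mθ.injective
    rw [θσ, θper, θσ]
  let X : ℝ → ℝ := fun t => (γ (σ t)).1
  let Y : ℝ → ℝ := fun t => (γ (σ t)).2
  have dX : ∀ t, HasDerivAt X (ρ t * cos t) t := by
    intro t
    have := (dx (σ t)).comp t (dσ t)
    rw [ha, θσ, mul_comm] at this
    exact this
  have dY : ∀ t, HasDerivAt Y (ρ t * sin t) t := by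
    intro t
    have := (dy (σ t)).comp t (dσ t)
    rw [hb, θσ, mul_comm] at this
    exact this
  have pX : Function.Periodic X K := by
    intro t; simp only [X, σper, hper (σ t)]
  have pY : Function.Periodic Y K := by
    intro t; simp only [Y, σper, hper (σ t)]
  have hm1 : m = 1 := by
    by_contra hne
    have h2 : (2 : ℝ) ≤ m := by
      have : (2 : ℤ) ≤ m := by omega
      exact_mod_cast this
    refine turning_aux X Y ρ K (by nlinarith) hρ dX dY pX pY ?_ ?_ ?_
    · rw [← hm]; exact Real.cos_periodic.int_mul m
    · rw [← hm]; exact Real.sin_periodic.int_mul m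
    · intro u v huv hvu h1 h2
      have hlt := mσ huv
      have hlt2 := mσ hvu
      rw [σper] at hlt2
      have hg : γ (σ u) = γ (σ v) := Prod.ext h1 h2
      obtain ⟨i, hi, -⟩ := existsUnique_sub_zsmul_mem_Ico hL (σ u) 0
      obtain ⟨j, hj, -⟩ := existsUnique_sub_zsmul_mem_Ico hL (σ v) 0
      simp only [zero_add] at hi hj
      have := hsimple hi hj (by rw [hper.sub_zsmul_eq, hper.sub_zsmul_eq, hg])
      simp only [zsmul_eq_mul] at this
      have l1 : 0 < ((j - i : ℤ) : ℝ) * L := by push_cast; linarith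
      have l2 : ((j - i : ℤ) : ℝ) * L < 1 * L := by push_cast; linarith
      have l3 : (0 : ℝ) < ((j - i : ℤ) : ℝ) := pos_of_mul_pos_left l1 hL.le
      have l4 : ((j - i : ℤ) : ℝ) < 1 := lt_of_mul_lt_mul_right l2 hL.le
      have l5 : 0 < j - i := by exact_mod_cast l3
      have l6 : j - i < 1 := by exact_mod_cast l4
      omega
  have hK2 : K = 2 * π := by rw [← hm, hm1]; simp
  rw [hK2] at pX pY σper
  -- change of variables
  have σ0 : σ θ₀ = 0 := by rw [← θ0, σθ]
  have cv : ∀ F : ℝ → ℝ, Continuous F →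
      (∫ s in (0 : ℝ)..L, F s) = ∫ t in θ₀..θ₀ + 2 * π, F (σ t) * ρ t := by
    intro F hF
    have := intervalIntegral.integral_comp_mul_deriv (a := θ₀) (b := θ₀ + 2 * π)
      (fun t _ => dσ t) cρ.continuousOn hF
    rw [σper, σ0, zero_add] at this
    exact this.symm
  have i1 : L = ∫ t in θ₀..θ₀ + 2 * π, ρ t := by
    have := cv (fun _ => 1) continuous_const
    simpa using this
  have i2 : (∫ s in (0 : ℝ)..L, ((deriv γ s).1 * (deriv (deriv γ) s).2 -
              (deriv γ s).2 * (deriv (deriv γ) s).1)⁻¹) = ∫ t in θ₀..θ₀ + 2 * π, ρ t * ρ t :=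
    cv (fun s => (κ s)⁻¹) (cκ.inv₀ fun t => (hκ _).ne')
  have i3 : (∫ s in (0 : ℝ)..L, ((γ s).1 * (deriv γ s).2 - (γ s).2 * (deriv γ s).1)) =
      ∫ t in θ₀..θ₀ + 2 * π, (X t * sin t - Y t * cos t) * ρ t := by
    rw [cv (fun s => (γ s).1 * (deriv γ s).2 - (γ s).2 * (deriv γ s).1) (by fun_prop)]
    congr 1
    funext t
    have h1 : (deriv γ (σ t)).1 = cos t := by rw [← θσ t, ← ha, θσ]
    have h2 : (deriv γ (σ t)).2 = sin t := by rw [← θσ t, ← hb, θσ]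
    simp only [h1, h2, X, Y]
  have W := wirtinger_aux θ₀ (fun t => X t * sin t - Y t * cos t)
    (fun t => X t * cos t + Y t * sin t) ρ cρ
    (fun t => by
      refine (((dX t).mul (hasDerivAt_sin t)).sub ((dY t).mul (hasDerivAt_cos t))).congr_deriv ?_
      ring)
    (fun t => by
      refine (((dX t).mul (hasDerivAt_cos t)).add ((dY t).mul (hasDerivAt_sin t))).congr_deriv ?_
      linear_combination (ρ t) * sin_sq_add_cos_sq t)
    (by simp only [pX θ₀, pY θ₀, sin_add_two_pi, cos_add_two_pi])
    (by simp only [pX θ₀, pY θ₀, sin_add_two_pi, cos_add_two_pi])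
  rw [← i1, ← i2, ← i3] at W
  rw [hA]
  have e1 : 2 * π / 3 * (L ^ 2 / (2 * π)) = L ^ 2 / 3 := by field_simp
  rw [mul_sub, e1]
  linarith
end
end
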